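/- Let A = (a_{ij}), B ∈ ^cΞ with ro(A) = co(B), and suppose that B − R·E^θ_{h,h+1} is a diagonal matrix for some h with 1 ≤ h ≤ r and some R ∈ ℕ. Then, as functions on X_c × X_c, e_B ∗ e_A = Σ_t q^{Σ_{(j,u): j > u} a_{hj} t_u} · (Π_{u=1}^{𝔫} [a_{hu} + t_u ; t_u]_q) · e_{A + Σ_{u=1}^{𝔫} t_u (E^θ_{h,u} − E^θ_{h+1,u})}, where the sum is over all t = (t_1, …, t_𝔫) ∈ ℕ^𝔫 with Σ_{u=1}^{𝔫} t_u = R such that t_u ≤ a_{h+1,u} for all u if h < r, and t_u + t_{𝔫+1−u} ≤ a_{h+1,u} for all u if h = r. -/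

import Mathlib

open scoped Classical

noncomputable section

namespace FlagC

variable {k V : Type*} [Field k] [AddCommGroup V] [Module k V]

/-- The orthogonal complement `{v | ∀ u ∈ N, Φ u v = 0}` of a submodule with respect to a
bilinear form. -/
def perpB (Φ : V →ₗ[k] V →ₗ[k] k) (N : Submodule k V) : Submodule k V where
  carrier := {v | ∀ u ∈ N, Φ u v = 0}
  zero_mem' := fun u _ => map_zero (Φ u)
  add_mem' := fun {a b} ha hb u hu => by rw [map_add, ha u hu, hb u hu, add_zero]
  smul_mem' := fun c v hv u hu => by rw [map_smul, hv u hu, smul_zero]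

/-- A complete isotropic flag of type `C`:  `0 = L 0 ⊆ L 1 ⊆ ⋯ ⊆ L nn = V` with
`L (nn - i) = (L i)^⊥`.  (The values `L i` for `i > nn` are required to equal `⊤` so that a
flag is determined by finitely many submodules.) -/
def IsFlag (Φ : V →ₗ[k] V →ₗ[k] k) (nn : ℕ) (L : ℕ → Submodule k V) : Prop :=
  L 0 = ⊥ ∧ (∀ i, L i ≤ L (i + 1)) ∧ (∀ i, nn ≤ i → L i = ⊤) ∧
    ∀ i, i ≤ nn → L (nn - i) = perpB Φ (L i)

/-- The set `X_c` of complete isotropic flags. -/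
def Flags (Φ : V →ₗ[k] V →ₗ[k] k) (nn : ℕ) := {L : ℕ → Submodule k V // IsFlag Φ nn L}

/-- `dim_k (p / s)`, the dimension of the quotient of `p` by `s ∩ p`. -/
def relDim (p s : Submodule k V) : ℕ :=
  Module.finrank k (↥p ⧸ (s.comap p.subtype))

/-- The characteristic function `e_A` of the orbit `O_A`: the set of pairs of flags `(L, L′)`
with `dim_k (Lᵢ ∩ L′ⱼ)/(L_{i-1} ∩ L′ⱼ + Lᵢ ∩ L′_{j-1}) = A i j` for all `1 ≤ i, j ≤ nn`. -/
def eMat (Φ : V →ₗ[k] V →ₗ[k] k) (nn : ℕ) (A : ℕ → ℕ → ℤ) :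
    Flags Φ nn × Flags Φ nn → ℚ := fun LL =>
  if ∀ i ∈ Finset.Icc 1 nn, ∀ j ∈ Finset.Icc 1 nn,
      (relDim ((LL.1.1 i) ⊓ (LL.2.1 j))
        (((LL.1.1 (i - 1)) ⊓ (LL.2.1 j)) ⊔ ((LL.1.1 i) ⊓ (LL.2.1 (j - 1)))) : ℤ) = A i j
  then 1 else 0

/-- Convolution product of functions on `X_c × X_c`. -/
def conv (Φ : V →ₗ[k] V →ₗ[k] k) (nn : ℕ)
    (f g : Flags Φ nn × Flags Φ nn → ℚ) : Flags Φ nn × Flags Φ nn → ℚ :=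
  fun LL => ∑ᶠ L' : Flags Φ nn, f (LL.1, L') * g (L', LL.2)

/-- Membership in `^cΞ`: an `nn × nn` matrix of natural numbers (recorded as an
integer-valued function on `[1,nn] × [1,nn]`) with total sum `2d` and with
`a_{ij} = a_{nn+1-i, nn+1-j}`. -/
def MemXiC (nn d : ℕ) (A : ℕ → ℕ → ℤ) : Prop :=
  (∀ i ∈ Finset.Icc 1 nn, ∀ j ∈ Finset.Icc 1 nn, 0 ≤ A i j) ∧
  (∑ i ∈ Finset.Icc 1 nn, ∑ j ∈ Finset.Icc 1 nn, A i j) = 2 * d ∧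
  ∀ i ∈ Finset.Icc 1 nn, ∀ j ∈ Finset.Icc 1 nn, A i j = A (nn + 1 - i) (nn + 1 - j)

/-- Row sums. -/
def roM (nn : ℕ) (A : ℕ → ℕ → ℤ) (i : ℕ) : ℤ := ∑ j ∈ Finset.Icc 1 nn, A i j

/-- Column sums. -/
def coM (nn : ℕ) (A : ℕ → ℕ → ℤ) (j : ℕ) : ℤ := ∑ i ∈ Finset.Icc 1 nn, A i j

/-- `E^θ_{ij} = E_{ij} + E_{nn+1-i, nn+1-j}`. -/
def Eth (nn i j : ℕ) : ℕ → ℕ → ℤ := fun a b =>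
  (if a = i ∧ b = j then 1 else 0) + (if a = nn + 1 - i ∧ b = nn + 1 - j then 1 else 0)

/-- The Gaussian binomial coefficient `[m; t]_q = ∏_{i=1}^{t} (q^{m-i+1} - 1)/(q^i - 1)`. -/
def qbinom (q : ℚ) (m : ℤ) (t : ℕ) : ℚ :=
  ∏ i ∈ Finset.Icc 1 t, (q ^ (m - (i : ℤ) + 1) - 1) / (q ^ (i : ℤ) - 1)

end FlagC

namespace FlagC

open Module

lemma card_fib {α β : Type*} [Finite α] [Finite β] (f : α → β) (c : ℚ)
    (hc : ∀ b, (Nat.card {a // f a = b} : ℚ) = c) :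
    (Nat.card α : ℚ) = Nat.card β * c := by
  have := Fintype.ofFinite β
  rw [← Nat.card_congr (Equiv.sigmaFiberEquiv f), Nat.card_sigma]
  push_cast
  rw [Finset.sum_congr rfl (fun b _ => hc b)]
  simp [Nat.card_eq_fintype_card]

section count

set_option linter.unusedSectionVars false

variable {k V : Type*} [Field k] [Fintype k] [AddCommGroup V] [Module k V]
    [FiniteDimensional k V]

/-- tuples in `Q` independent modulo `P`. -/
abbrev Tup (P Q : Submodule k V) (m : ℕ) : Type _ :=
  {v : Fin m → V // (∀ i, v i ∈ Q) ∧
    finrank k ↥(P ⊔ Submodule.span k (Set.range v)) = finrank k P + m}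

instance finV : Finite (Submodule k V) := by
  have : Finite V := Module.finite_of_finite k
  exact Finite.of_injective (fun S : Submodule k V => (S : Set V)) SetLike.coe_injective

instance finTup (P Q : Submodule k V) (m : ℕ) : Finite (Tup P Q m) := by
  have : Finite V := Module.finite_of_finite k
  infer_instance

lemma finrank_sup_span_le (P : Submodule k V) (x : V) :
    finrank k ↥(P ⊔ Submodule.span k {x}) ≤ finrank k P + 1 := by
  have h1 := Submodule.finrank_sup_add_finrank_inf_eq P (Submodule.span k {x})
  have h2 : finrank k ↥(Submodule.span k {x}) ≤ 1 := by
    simpa using finrank_span_le_card (R := k) ({x} : Set V)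
  omega

lemma finrank_sup_span_eq (P : Submodule k V) (x : V) (hx : x ∉ P) :
    finrank k ↥(P ⊔ Submodule.span k {x}) = finrank k P + 1 := by
  apply le_antisymm (finrank_sup_span_le P x)
  by_contra hlt
  have := Submodule.eq_of_le_of_finrank_le (S₁ := P) (S₂ := P ⊔ Submodule.span k {x})
    le_sup_left (by omega)
  apply hx
  rw [this]
  exact Submodule.mem_sup_right (Submodule.mem_span_singleton_self x)

lemma finrank_sup_tuple_le (P : Submodule k V) (m : ℕ) (v : Fin m → V) :
    finrank k ↥(P ⊔ Submodule.span k (Set.range v)) ≤ finrank k P + m := by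
  have h1 := Submodule.finrank_sup_add_finrank_inf_eq P (Submodule.span k (Set.range v))
  have h2 := finrank_range_le_card (R := k) v
  unfold Set.finrank at h2
  simp at h2
  omega

lemma tup_cons (P : Submodule k V) (m : ℕ) (v : Fin m → V) (x : V) :
    finrank k ↥(P ⊔ Submodule.span k (Set.range (Fin.cons x v : Fin (m+1) → V)))
      = finrank k P + (m + 1) ↔
    finrank k ↥(P ⊔ Submodule.span k (Set.range v)) = finrank k P + m ∧
      x ∉ P ⊔ Submodule.span k (Set.range v) := by
  have e : P ⊔ Submodule.span k (Set.range (Fin.cons x v : Fin (m+1) → V)) =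
      (P ⊔ Submodule.span k (Set.range v)) ⊔ Submodule.span k {x} := by
    rw [Fin.range_cons, Submodule.span_insert, sup_comm (Submodule.span k {x}), sup_assoc]
  rw [e]
  have h1 := finrank_sup_span_le (P ⊔ Submodule.span k (Set.range v)) x
  have h2 := finrank_sup_tuple_le P m v
  constructor
  · intro h
    refine ⟨by omega, fun hx => ?_⟩
    rw [sup_eq_left.2 (by simpa using hx)] at h
    omega
  · rintro ⟨h3, h4⟩
    rw [finrank_sup_span_eq _ _ h4]; omega

lemma card_sub (P : Submodule k V) : (Nat.card P : ℚ) = (Fintype.card k : ℚ) ^ finrank k P := by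
  rw [Module.natCard_eq_pow_finrank (K := k)]; simp

lemma card_diff (P Q : Submodule k V) (h : P ≤ Q) :
    (Nat.card {x : V // x ∈ Q ∧ x ∉ P} : ℚ) =
      (Fintype.card k : ℚ) ^ finrank k Q - (Fintype.card k : ℚ) ^ finrank k P := by
  have : Finite V := Module.finite_of_finite k
  have h1 : Nat.card {x : V // x ∈ Q ∧ x ∉ P} + Nat.card P = Nat.card Q := by
    have := Set.ncard_sdiff_add_ncard_of_subset (s := (P : Set V)) (t := (Q : Set V)) h
    exact this
  rw [← card_sub, ← card_sub, ← h1]; push_cast; ring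

lemma card_tup (P Q : Submodule k V) (h : P ≤ Q) (m : ℕ) :
    (Nat.card (Tup P Q m) : ℚ) = ∏ i ∈ Finset.range m,
      ((Fintype.card k : ℚ) ^ finrank k Q - (Fintype.card k : ℚ) ^ (finrank k P + i)) := by
  have hfin : Finite V := Module.finite_of_finite k
  induction m with
  | zero =>
    simp only [Finset.range_zero, Finset.prod_empty]
    have : Unique (Tup P Q 0) :=
      { default := ⟨Fin.elim0, fun i => i.elim0, by rw [Set.range_eq_empty, Submodule.span_empty, sup_bot_eq]; rfl⟩
        uniq := fun a => Subtype.ext (Subsingleton.elim _ _) }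
    simp
  | succ m ih =>
    rw [Finset.prod_range_succ, ← ih]
    refine card_fib (fun v : Tup P Q (m+1) => (⟨Fin.tail v.1, fun i => v.2.1 _, ?_⟩ : Tup P Q m)) _ ?_
    · have := v.2.2
      rw [← Fin.cons_self_tail v.1, tup_cons] at this
      exact this.1
    · intro w
      have hle : P ⊔ Submodule.span k (Set.range w.1) ≤ Q := by
        refine sup_le h (Submodule.span_le.2 ?_)
        rintro _ ⟨i, rfl⟩
        exact w.2.1 i
      have hcd := card_diff _ _ hle
      rw [w.2.2] at hcd
      refine Eq.trans ?_ hcd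
      congr 1
      refine Nat.card_congr ⟨fun v => ⟨v.1.1 0, v.1.2.1 0, ?_⟩, fun x => ⟨⟨Fin.cons x.1 w.1, ?_, ?_⟩, ?_⟩, ?_, ?_⟩
      · have h1 := v.1.2.2
        have h2 := congrArg Subtype.val v.2
        simp only at h2
        rw [← Fin.cons_self_tail v.1.1, tup_cons, h2] at h1
        exact h1.2
      · intro i
        refine Fin.cases ?_ (fun j => ?_) i
        · simpa using x.2.1
        · simpa using w.2.1 j
      · rw [tup_cons]
        exact ⟨w.2.2, x.2.2⟩
      · apply Subtype.ext; simp
      · intro v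
        apply Subtype.ext; apply Subtype.ext
        have h2 := congrArg Subtype.val v.2
        simp only at h2
        simp only [← h2]
        exact Fin.cons_self_tail _
      · intro x; apply Subtype.ext; simp

/-- subspaces `S ≤ Q` with `S ⊓ P = S0` and `dim S = dim S0 + a`. -/
lemma card_key (S0 P Q : Submodule k V) (h0 : S0 ≤ P) (h : P ≤ Q) (a : ℕ) :
    (Nat.card {S : Submodule k V // S ≤ Q ∧ S ⊓ P = S0 ∧ finrank k S = finrank k S0 + a} : ℚ) *
      ∏ i ∈ Finset.range a, ((Fintype.card k : ℚ) ^ (finrank k S0 + a)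
        - (Fintype.card k : ℚ) ^ (finrank k S0 + i)) =
    ∏ i ∈ Finset.range a,
      ((Fintype.card k : ℚ) ^ finrank k Q - (Fintype.card k : ℚ) ^ (finrank k P + i)) := by
  rw [← card_tup P Q h a]
  symm
  refine card_fib (fun v : Tup P Q a => (⟨S0 ⊔ Submodule.span k (Set.range v.1), ?_⟩ :
    {S : Submodule k V // S ≤ Q ∧ S ⊓ P = S0 ∧ finrank k S = finrank k S0 + a})) _ ?_
  · have h1 := v.2.2
    have h2 := finrank_sup_tuple_le S0 a v.1
    have h3 := Submodule.finrank_sup_add_finrank_inf_eq (S0 ⊔ Submodule.span k (Set.range v.1)) P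
    have h4 : (S0 ⊔ Submodule.span k (Set.range v.1)) ⊔ P = P ⊔ Submodule.span k (Set.range v.1) := by
      rw [sup_right_comm, sup_eq_right.2 h0]
    rw [h4, h1] at h3
    have h5 : S0 ≤ (S0 ⊔ Submodule.span k (Set.range v.1)) ⊓ P := le_inf le_sup_left h0
    have h6 := Submodule.eq_of_le_of_finrank_le h5 (by omega)
    refine ⟨sup_le (h0.trans h) (Submodule.span_le.2 ?_), h6.symm, ?_⟩
    · rintro _ ⟨i, rfl⟩
      exact v.2.1 i
    · rw [← h6] at h3; omega
  · rintro ⟨S, hS1, hS2, hS3⟩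
    have hS0 : S0 ≤ S := by rw [← hS2]; exact inf_le_left
    have hcd := card_tup S0 S hS0 a
    rw [hS3] at hcd
    refine Eq.trans ?_ hcd
    congr 1
    refine Nat.card_congr ⟨fun v => ⟨v.1.1, ?_, ?_⟩, fun v => ⟨⟨v.1, ?_, ?_⟩, ?_⟩, ?_, ?_⟩
    · intro i
      have := congrArg Subtype.val v.2
      simp only at this
      exact this.le (Submodule.mem_sup_right (Submodule.subset_span ⟨i, rfl⟩))
    · have := congrArg Subtype.val v.2
      simp only at this
      rw [this, hS3]
    · intro i; exact hS1 (v.2.1 i)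
    · have h1 : S0 ⊔ Submodule.span k (Set.range v.1) = S := by
        refine Submodule.eq_of_le_of_finrank_eq (sup_le hS0 (Submodule.span_le.2 ?_)) ?_
        · rintro _ ⟨i, rfl⟩
          exact v.2.1 i
        · rw [v.2.2, hS3]
      have h4 : P ⊔ Submodule.span k (Set.range v.1) = S ⊔ P := by
        have h5 : (S0 ⊔ Submodule.span k (Set.range v.1)) ⊔ P = S ⊔ P := congrArg (· ⊔ P) h1
        rw [← h5, sup_right_comm, sup_eq_right.2 h0]
      have h3 := Submodule.finrank_sup_add_finrank_inf_eq S P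
      rw [h4]
      rw [hS2] at h3
      omega
    · apply Subtype.ext
      refine Submodule.eq_of_le_of_finrank_eq (sup_le hS0 (Submodule.span_le.2 ?_)) ?_
      · rintro _ ⟨i, rfl⟩
        exact v.2.1 i
      · rw [v.2.2, hS3]
    · intro v; rfl
    · intro v; rfl

lemma prod_qbinom (q : ℚ) (hq : 1 < q) (a t : ℕ) :
    qbinom q ((a : ℤ) + t) t * ∏ i ∈ Finset.range a, (q ^ a - q ^ i) =
      ∏ i ∈ Finset.range a, (q ^ (a + t) - q ^ i) := by
  have hne : ∀ i : ℕ, q ^ (i + 1) - 1 ≠ 0 := fun i => by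
    have := one_lt_pow₀ hq (Nat.succ_ne_zero i)
    exact (sub_pos.2 this).ne'
  have hφ : ∀ n : ℕ, ∏ i ∈ Finset.range n, (q ^ (i + 1) - 1) ≠ 0 := fun n =>
    Finset.prod_ne_zero_iff.2 fun i _ => hne i
  have e1 : ∀ s : ℕ, ∏ i ∈ Finset.range a, (q ^ (a + s) - q ^ i) =
      (∏ i ∈ Finset.range a, q ^ i) * ∏ i ∈ Finset.range a, (q ^ (s + i + 1) - 1) := by
    intro s
    rw [← Finset.prod_range_reflect (fun i => (q ^ (s + i + 1) - 1)), ← Finset.prod_mul_distrib]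
    refine Finset.prod_congr rfl fun i hi => ?_
    have := Finset.mem_range.1 hi
    rw [mul_sub, ← pow_add, mul_one]
    congr 2; omega
  have e2 : qbinom q ((a : ℤ) + t) t * ∏ i ∈ Finset.range t, (q ^ (i + 1) - 1) =
      ∏ i ∈ Finset.range t, (q ^ (a + i + 1) - 1) := by
    unfold qbinom
    rw [← Finset.prod_range_reflect (fun i => (q ^ (a + i + 1) - 1))]
    have : Finset.Icc 1 t = (Finset.range t).image (fun i => i + 1) := by
      ext x; simp only [Finset.mem_Icc, Finset.mem_image, Finset.mem_range]
      constructor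
      · intro h; exact ⟨x - 1, by omega, by omega⟩
      · rintro ⟨y, h1, rfl⟩; omega
    rw [this, Finset.prod_image (fun a _ b _ h => by simpa using h), ← Finset.prod_mul_distrib]
    refine Finset.prod_congr rfl fun i hi => ?_
    have hi' := Finset.mem_range.1 hi
    have h1 : (a : ℤ) + t - ((i + 1 : ℕ) : ℤ) + 1 = ((a + (t - 1 - i) + 1 : ℕ) : ℤ) := by
      push_cast; omega
    rw [h1, zpow_natCast, zpow_natCast, div_mul_cancel₀ _ (hne i)]
  have e3 := e1 0
  rw [add_zero] at e3
  rw [e3, e1 t]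
  have e4 := Finset.prod_range_add (fun i => q ^ (i + 1) - 1) t a
  have e5 := Finset.prod_range_add (fun i => q ^ (i + 1) - 1) a t
  rw [add_comm a t] at e5
  have e6 := e4.symm.trans e5
  simp only [zero_add] at *
  rw [← e2] at e6
  have h7 := hφ t
  apply mul_left_cancel₀ h7
  linear_combination (∏ i ∈ Finset.range a, q ^ i) * (-e6)

lemma card_step (S0 P Q : Submodule k V) (h0 : S0 ≤ P) (h : P ≤ Q) (a t T : ℕ)
    (hP : finrank k P = finrank k S0 + T) (hQ : finrank k Q = finrank k P + (a + t)) :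
    (Nat.card {S : Submodule k V // S ≤ Q ∧ S ⊓ P = S0 ∧ finrank k S = finrank k S0 + a} : ℚ) =
     (Fintype.card k : ℚ) ^ (a * T) * qbinom (Fintype.card k : ℚ) ((a : ℤ) + t) t := by
  have hq : (1 : ℚ) < Fintype.card k := by exact_mod_cast Fintype.one_lt_card
  set q : ℚ := (Fintype.card k : ℚ) with hqd
  have h1 := card_key S0 P Q h0 h a
  rw [← hqd, hQ] at h1
  have e : ∀ c x : ℕ, ∏ i ∈ Finset.range a, (q ^ (c + x) - q ^ (c + i)) =
      (q ^ c) ^ a * ∏ i ∈ Finset.range a, (q ^ x - q ^ i) := by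
    intro c x
    rw [← Finset.card_range a, ← Finset.prod_const, Finset.card_range, ← Finset.prod_mul_distrib]
    refine Finset.prod_congr rfl fun i hi => ?_
    rw [pow_add, pow_add]; ring
  rw [e, e, ← prod_qbinom q hq, hP] at h1
  have hne : (q ^ finrank k S0) ^ a * ∏ i ∈ Finset.range a, (q ^ a - q ^ i) ≠ 0 := by
    refine mul_ne_zero (by positivity) (Finset.prod_ne_zero_iff.2 fun i hi => ?_)
    exact (sub_pos.2 (pow_lt_pow_right₀ hq (Finset.mem_range.1 hi))).ne'
  apply mul_right_cancel₀ hne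
  rw [h1, pow_add, mul_pow, ← pow_mul q T a, mul_comm T a]
  ring

/-- The chain count. -/
lemma card_chain (P : ℕ → Submodule k V) (hmono : ∀ i, P i ≤ P (i + 1)) (a t : ℕ → ℕ) (m : ℕ)
    (hdim : ∀ j ≤ m, finrank k (P j) = finrank k (P 0) + ∑ b ∈ Finset.Icc 1 j, (a b + t b)) :
    (Nat.card {S : Submodule k V // S ≤ P m ∧ ∀ j ≤ m, finrank k ↥(S ⊓ P j) =
      finrank k (P 0) + ∑ b ∈ Finset.Icc 1 j, a b} : ℚ) =
    (Fintype.card k : ℚ) ^ (∑ j ∈ Finset.Icc 1 m, a j * ∑ u ∈ Finset.Icc 1 (j - 1), t u) *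
      ∏ u ∈ Finset.Icc 1 m, qbinom (Fintype.card k : ℚ) ((a u : ℤ) + t u) (t u) := by
  have hm : Monotone P := monotone_nat_of_le_succ hmono
  induction m with
  | zero =>
    have : Unique {S : Submodule k V // S ≤ P 0 ∧ ∀ j ≤ 0, finrank k ↥(S ⊓ P j) =
      finrank k (P 0) + ∑ b ∈ Finset.Icc 1 j, a b} :=
      { default := ⟨P 0, le_rfl, fun j hj => by
          obtain rfl : j = 0 := by omega
          rw [inf_idem]; simp⟩
        uniq := fun S => by
          apply Subtype.ext
          have h2 := S.2.2 0 le_rfl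
          rw [inf_eq_left.2 S.2.1] at h2
          exact Submodule.eq_of_le_of_finrank_eq S.2.1 (by simpa using h2) }
    rw [Nat.card_unique]
    simp
  | succ m ih =>
    have ih := ih fun j hj => hdim j (by omega)
    rw [Finset.sum_Icc_succ_top (by omega), Finset.prod_Icc_succ_top (by omega), pow_add,
      mul_mul_mul_comm, ← ih]
    refine card_fib (fun S : {S : Submodule k V // S ≤ P (m+1) ∧ ∀ j ≤ (m+1), finrank k ↥(S ⊓ P j) =
      finrank k (P 0) + ∑ b ∈ Finset.Icc 1 j, a b} => (⟨S.1 ⊓ P m, inf_le_right, fun j hj => by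
        rw [inf_assoc, inf_eq_right.2 (hm hj)]
        exact S.2.2 j (by omega)⟩ :
        {S : Submodule k V // S ≤ P m ∧ ∀ j ≤ m, finrank k ↥(S ⊓ P j) =
      finrank k (P 0) + ∑ b ∈ Finset.Icc 1 j, a b})) _ ?_
    rintro ⟨S0, hS0, hS1⟩
    have h1 := hS1 m le_rfl
    rw [inf_eq_left.2 hS0] at h1
    have h2 := hdim m (by omega)
    have h3 := hdim (m + 1) le_rfl
    rw [Finset.sum_Icc_succ_top (by omega)] at h3
    rw [Nat.add_sub_cancel, ← card_step S0 (P m) (P (m+1)) hS0 (hmono m) (a (m+1)) (t (m+1))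
      (∑ u ∈ Finset.Icc 1 m, t u) (by rw [h2, h1, Finset.sum_add_distrib]; ring) (by omega)]
    congr 1
    refine Nat.card_congr ⟨fun S => ⟨S.1.1, S.1.2.1, congrArg Subtype.val S.2, ?_⟩,
      fun S => ⟨⟨S.1, S.2.1, ?_⟩, ?_⟩, ?_, ?_⟩
    · have := S.1.2.2 (m+1) le_rfl
      rw [inf_eq_left.2 S.1.2.1, Finset.sum_Icc_succ_top (by omega)] at this
      omega
    · intro j hj
      rcases Nat.lt_or_ge m j with hj' | hj'
      · obtain rfl : j = m + 1 := by omega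
        rw [inf_eq_left.2 S.2.1, Finset.sum_Icc_succ_top (by omega), S.2.2.2]; omega
      · rw [← inf_eq_right.2 (hm hj'), ← inf_assoc, S.2.2.1]
        exact hS1 j hj'
    · exact Subtype.ext S.2.2.1
    · intro S; rfl
    · intro S; rfl

end count

section geom

set_option linter.unusedSectionVars false

variable {k V : Type*} [Field k] [AddCommGroup V] [Module k V] [FiniteDimensional k V]

/-- Intersection dimensions. -/
def dm (L M : ℕ → Submodule k V) (i j : ℕ) : ℤ := (finrank k ↥(L i ⊓ M j) : ℤ)

/-- Second difference. -/
def D2 (f : ℕ → ℕ → ℤ) (i j : ℕ) : ℤ := f i j - f (i - 1) j - f i (j - 1) + f (i - 1) (j - 1)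

lemma relDim_D2 (L M : ℕ → Submodule k V) (hL : Monotone L) (hM : Monotone M) (i j : ℕ) :
    (relDim (L i ⊓ M j) ((L (i - 1) ⊓ M j) ⊔ (L i ⊓ M (j - 1))) : ℤ) = D2 (dm L M) i j := by
  have hLi : L (i - 1) ≤ L i := hL (Nat.sub_le _ _)
  have hMj : M (j - 1) ≤ M j := hM (Nat.sub_le _ _)
  have hle : (L (i - 1) ⊓ M j) ⊔ (L i ⊓ M (j - 1)) ≤ L i ⊓ M j :=
    sup_le (inf_le_inf_right _ hLi) (inf_le_inf_left _ hMj)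
  unfold relDim D2 dm
  have h1 := Submodule.finrank_quotient_add_finrank
    (((L (i - 1) ⊓ M j) ⊔ (L i ⊓ M (j - 1))).comap (L i ⊓ M j).subtype)
  rw [(Submodule.comapSubtypeEquivOfLe hle).finrank_eq] at h1
  have h2 := Submodule.finrank_sup_add_finrank_inf_eq (L (i - 1) ⊓ M j) (L i ⊓ M (j - 1))
  have h3 : (L (i - 1) ⊓ M j) ⊓ (L i ⊓ M (j - 1)) = L (i - 1) ⊓ M (j - 1) := by
    rw [inf_inf_inf_comm, inf_eq_left.2 hLi, inf_eq_right.2 hMj]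
  rw [h3] at h2
  omega

lemma D2_unique (n : ℕ) (f g : ℕ → ℕ → ℤ) (h0 : ∀ j, f 0 j = g 0 j) (h0' : ∀ i, f i 0 = g i 0)
    (hD : ∀ i ∈ Finset.Icc 1 n, ∀ j ∈ Finset.Icc 1 n, D2 f i j = D2 g i j) :
    ∀ i ≤ n, ∀ j ≤ n, f i j = g i j := by
  intro i
  induction i with
  | zero => intro _ j _; exact h0 j
  | succ i ih =>
    intro hi j
    induction j with
    | zero => intro _; exact h0' _
    | succ j ihj =>
      intro hj
      have := hD (i + 1) (by simp; omega) (j + 1) (by simp; omega)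
      unfold D2 at this
      simp only [Nat.add_sub_cancel] at this
      have h1 := ih (by omega) (j + 1) hj
      have h2 := ih (by omega) j (by omega)
      have h3 := ihj (by omega)
      omega

lemma D2_tele (f : ℕ → ℕ → ℤ) (i : ℕ) (h0 : ∀ i, f i 0 = 0) (j : ℕ) :
    f i j = f (i - 1) j + ∑ b ∈ Finset.Icc 1 j, D2 f i b := by
  induction j with
  | zero => simp [h0]
  | succ j ih =>
    rw [Finset.sum_Icc_succ_top (by omega)]
    unfold D2 at *
    simp only [Nat.add_sub_cancel]
    omega

lemma perp_finrank (Φ : V →ₗ[k] V →ₗ[k] k) (halt : ∀ v : V, Φ v v = 0)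
    (hnondeg : ∀ v : V, (∀ w : V, Φ v w = 0) → v = 0) (N : Submodule k V) :
    finrank k (perpB Φ N) + finrank k N = finrank k V ∧ perpB Φ (perpB Φ N) = N := by
  have hr : LinearMap.BilinForm.IsRefl Φ := (LinearMap.IsAlt.isRefl halt)
  have hn : LinearMap.BilinForm.Nondegenerate Φ := by
    refine ⟨hnondeg, fun v hv => hnondeg v fun w => hr _ _ (hv w)⟩
  have e : ∀ N, perpB Φ N = LinearMap.BilinForm.orthogonal Φ N := fun N => rfl
  rw [e, e]
  refine ⟨?_, LinearMap.BilinForm.orthogonal_orthogonal hn hr N⟩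
  have := LinearMap.BilinForm.finrank_orthogonal hn N
  have h2 := Submodule.finrank_le N
  omega

lemma perp_anti (Φ : V →ₗ[k] V →ₗ[k] k) {N M : Submodule k V} (h : N ≤ M) :
    perpB Φ M ≤ perpB Φ N := fun _ hv u hu => hv u (h hu)

lemma perp_sup (Φ : V →ₗ[k] V →ₗ[k] k) (N M : Submodule k V) :
    perpB Φ (N ⊔ M) = perpB Φ N ⊓ perpB Φ M := by
  apply le_antisymm
  · exact le_inf (perp_anti Φ le_sup_left) (perp_anti Φ le_sup_right)
  · rintro v ⟨h1, h2⟩ u hu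
    obtain ⟨x, hx, y, hy, rfl⟩ := Submodule.mem_sup.1 hu
    rw [map_add, LinearMap.add_apply, h1 x hx, h2 y hy, add_zero]

variable {Φ : V →ₗ[k] V →ₗ[k] k} {n : ℕ}

lemma Flags.mono (L : Flags Φ n) : Monotone L.1 := monotone_nat_of_le_succ L.2.2.1

lemma eMat_eq (A : ℕ → ℕ → ℤ) (LL : Flags Φ n × Flags Φ n) :
    eMat Φ n A LL = if ∀ i ∈ Finset.Icc 1 n, ∀ j ∈ Finset.Icc 1 n,
      D2 (dm LL.1.1 LL.2.1) i j = A i j then 1 else 0 := by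
  unfold eMat
  simp only [relDim_D2 _ _ LL.1.mono LL.2.mono]
  congr

lemma D2_nonneg (L M : Flags Φ n) (i j : ℕ) : 0 ≤ D2 (dm L.1 M.1) i j := by
  rw [← relDim_D2 _ _ L.mono M.mono]; positivity

lemma dm_zl (L M : Flags Φ n) (j : ℕ) : dm L.1 M.1 0 j = 0 := by
  unfold dm; rw [L.2.1, bot_inf_eq]; simp

lemma dm_zr (L M : Flags Φ n) (j : ℕ) : dm L.1 M.1 j 0 = 0 := by
  unfold dm; rw [M.2.1, inf_bot_eq]; simp

lemma dm_top (L M : Flags Φ n) (i : ℕ) : dm L.1 M.1 i n = finrank k (L.1 i) := by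
  unfold dm; rw [M.2.2.2.1 n le_rfl, inf_top_eq]

lemma dm_dual (halt : ∀ v : V, Φ v v = 0)
    (hnondeg : ∀ v : V, (∀ w : V, Φ v w = 0) → v = 0) (L M : Flags Φ n) (i j : ℕ)
    (hi : i ≤ n) (hj : j ≤ n) :
    dm L.1 M.1 (n - i) j = finrank k V - finrank k (L.1 i) - finrank k (M.1 (n - j))
      + dm L.1 M.1 i (n - j) := by
  unfold dm
  have h1 := L.2.2.2.2 i hi
  have h2 := M.2.2.2.2 (n - j) (by omega)
  rw [show n - (n - j) = j by omega] at h2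
  rw [h1, h2, ← perp_sup]
  have h3 := (perp_finrank Φ halt hnondeg (L.1 i ⊔ M.1 (n - j))).1
  have h4 := Submodule.finrank_sup_add_finrank_inf_eq (L.1 i) (M.1 (n - j))
  omega

/-- The second flag is obtained from the first by shrinking the step h by dimension R. -/
def Adj (h R : ℕ) (L L' : Flags Φ n) : Prop :=
  (∀ i, i ≠ h → i ≠ n - h → L'.1 i = L.1 i) ∧ L'.1 h ≤ L.1 h ∧
    finrank k (L.1 h) = finrank k (L'.1 h) + R

lemma adj_dm (halt : ∀ v : V, Φ v v = 0)
    (hnondeg : ∀ v : V, (∀ w : V, Φ v w = 0) → v = 0) {h R : ℕ} (hn : 2 * h < n)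
    {L L' : Flags Φ n} (hadj : Adj h R L L') (M : Flags Φ n) (T : ℕ → ℤ)
    (hT : ∀ j ≤ n, T j = dm L.1 M.1 h j - dm L'.1 M.1 h j) :
    ∀ i ≤ n, ∀ j ≤ n, dm L.1 M.1 i j = dm L'.1 M.1 i j +
      ((if i = h then T j else 0) - (if i = n - h then R - T (n - j) else 0)) := by
  intro i hi j hj
  by_cases h1 : i = h
  · subst h1
    rw [if_pos rfl, if_neg (by omega), hT j hj]; ring
  · rw [if_neg h1]
    by_cases h2 : i = n - h
    · rw [if_pos h2, hT (n - j) (by omega), h2, dm_dual halt hnondeg L M h j (by omega) hj,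
        dm_dual halt hnondeg L' M h j (by omega) hj]
      have := hadj.2.2
      omega
    · rw [if_neg h2]
      unfold dm
      rw [hadj.1 i h1 h2]; simp

/-- The constructed flag. -/
lemma exists_flag (halt : ∀ v : V, Φ v v = 0)
    (hnondeg : ∀ v : V, (∀ w : V, Φ v w = 0) → v = 0) {h : ℕ} (hh : 1 ≤ h) (hn : 2 * h < n)
    (L : Flags Φ n) (S : Submodule k V) (h1 : L.1 (h - 1) ≤ S) (h2 : S ≤ L.1 h) :
    ∃ L' : Flags Φ n, (∀ i, i ≠ h → i ≠ n - h → L'.1 i = L.1 i) ∧ L'.1 h = S := by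
  have hm := L.mono
  have hp : L.1 (n - h) ≤ perpB Φ S := by
    rw [L.2.2.2.2 h (by omega)]; exact perp_anti Φ h2
  have hp' : perpB Φ S ≤ L.1 (n - h + 1) := by
    rw [show n - h + 1 = n - (h - 1) by omega, L.2.2.2.2 (h - 1) (by omega)]
    exact perp_anti Φ h1
  let F : ℕ → Submodule k V := fun i => if i = h then S else if i = n - h then perpB Φ S else L.1 i
  have hF : ∀ i, F i = if i = h then S else if i = n - h then perpB Φ S else L.1 i := fun i => rfl
  refine ⟨⟨F, ?_, ?_, ?_, ?_⟩, ?_, ?_⟩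
  · rw [hF, if_neg (by omega), if_neg (by omega)]; exact L.2.1
  · intro i
    rw [hF, hF]
    by_cases a1 : i = h
    · rw [if_pos a1, if_neg (by omega)]
      have : S ≤ L.1 (i + 1) := h2.trans (hm (by omega))
      split_ifs with a2
      · exact this.trans (by rw [a2]; exact hp)
      · exact this
    · rw [if_neg a1]
      by_cases a2 : i = n - h
      · rw [if_pos a2, if_neg (by omega), if_neg (by omega), a2]; exact hp'
      · rw [if_neg a2]
        by_cases a3 : i + 1 = h
        · rw [if_pos a3]; rw [show i = h - 1 by omega]; exact h1
        · rw [if_neg a3]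
          by_cases a4 : i + 1 = n - h
          · rw [if_pos a4]; exact (hm (by omega)).trans hp
          · rw [if_neg a4]; exact hm (by omega)
  · intro i hi
    rw [hF, if_neg (by omega), if_neg (by omega)]; exact L.2.2.2.1 i hi
  · intro i hi
    rw [hF, hF]
    by_cases a1 : i = h
    · rw [if_pos a1, if_neg (by omega), if_pos (by omega)]
    · rw [if_neg a1]
      by_cases a2 : i = n - h
      · rw [if_pos a2, if_pos (by omega), (perp_finrank Φ halt hnondeg S).2]
      · rw [if_neg a2, if_neg (by omega), if_neg (by omega)]; exact L.2.2.2.2 i hi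
  · intro i hi1 hi2
    exact (hF i).trans (by rw [if_neg hi1, if_neg hi2])
  · exact (hF h).trans (if_pos rfl)

lemma flag_ext {h : ℕ} (hh : h ≤ n) {L' L'' : Flags Φ n}
    (h1 : ∀ i, i ≠ h → i ≠ n - h → L'.1 i = L''.1 i) (h2 : L'.1 h = L''.1 h) : L' = L'' := by
  apply Subtype.ext
  funext i
  by_cases a1 : i = h
  · rw [a1, h2]
  · by_cases a2 : i = n - h
    · rw [a2, L'.2.2.2.2 h hh, L''.2.2.2.2 h hh, h2]
    · exact h1 i a1 a2

/-- B-side numerics. -/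
lemma D2_B (B : ℕ → ℕ → ℤ) (h R : ℕ) (hh : 1 ≤ h) (hn : 2 * h < n)
    (hBdiag : ∀ i ∈ Finset.Icc 1 n, ∀ j ∈ Finset.Icc 1 n, i ≠ j →
      B i j = (R : ℤ) * Eth n h (h + 1) i j) (c : ℕ → ℤ)
    (hc : ∀ j, c j = ∑ b ∈ Finset.Icc 1 j, coM n B b) :
    ∀ i ∈ Finset.Icc 1 n, ∀ j ∈ Finset.Icc 1 n,
      D2 (fun i j => c (min i j) + ((if i = h ∧ h + 1 ≤ j then (R : ℤ) else 0)
        - (if i = n - h ∧ n - h ≤ j then (R : ℤ) else 0))) i j = B i j := by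
  have hEth : ∀ i j, (R : ℤ) * Eth n h (h + 1) i j =
      (if i = h ∧ j = h + 1 then (R : ℤ) else 0) +
        (if i = n + 1 - h ∧ j = n - h then (R : ℤ) else 0) := by
    intro i j
    unfold Eth
    rw [show n + 1 - (h + 1) = n - h by omega]
    rw [mul_add, mul_ite, mul_ite, mul_one, mul_zero]
  have hstep : ∀ i, 1 ≤ i → c i = c (i - 1) + coM n B i := by
    intro i hi
    obtain ⟨j, rfl⟩ : ∃ j, i = j + 1 := ⟨i - 1, by omega⟩
    rw [hc, hc, Finset.sum_Icc_succ_top (by omega)]; rfl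
  have hco : ∀ i ∈ Finset.Icc 1 n, coM n B i = B i i +
      ((if i = h + 1 then (R : ℤ) else 0) + (if i = n - h then (R : ℤ) else 0)) := by
    intro i hi
    have e : ∀ a ∈ Finset.Icc 1 n, B a i = (if a = i then B i i else 0) +
      ((if a = h then (if i = h + 1 then (R : ℤ) else 0) else 0) +
        (if a = n + 1 - h then (if i = n - h then (R : ℤ) else 0) else 0)) := by
      intro a ha
      by_cases hai : a = i
      · subst hai
        rw [if_pos rfl, ← ite_and, ← ite_and, if_neg (by omega), if_neg (by omega)]; simp
      · rw [hBdiag a ha i hi hai, hEth, if_neg hai, ← ite_and, ← ite_and, zero_add]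
    unfold coM
    rw [Finset.sum_congr rfl e, Finset.sum_add_distrib, Finset.sum_add_distrib,
      Finset.sum_ite_eq', Finset.sum_ite_eq', Finset.sum_ite_eq', if_pos hi,
      if_pos (Finset.mem_Icc.2 (by omega) : h ∈ Finset.Icc 1 n),
      if_pos (Finset.mem_Icc.2 (by omega) : n + 1 - h ∈ Finset.Icc 1 n)]
  intro i hi j hj
  have hi' := Finset.mem_Icc.1 hi
  have hj' := Finset.mem_Icc.1 hj
  unfold D2
  rcases lt_trichotomy i j with hij | hij | hij
  · rw [hBdiag i hi j hj hij.ne, hEth]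
    simp only
    rw [min_eq_left (by omega : i ≤ j), min_eq_left (by omega : i - 1 ≤ j),
      min_eq_left (by omega : i ≤ j - 1), min_eq_left (by omega : i - 1 ≤ j - 1)]
    clear hco hstep hc hEth hBdiag
    grind (splits := 40)
  · subst hij
    have h1 := hco i hi
    have h2 := hstep i hi'.1
    simp only
    rw [min_self, min_eq_left (by omega : i - 1 ≤ i),
      min_eq_right (by omega : i - 1 ≤ i), min_self]
    clear hco hstep hc hEth hBdiag
    grind (splits := 40)
  · rw [hBdiag i hi j hj hij.ne', hEth]
    simp only
    rw [min_eq_right (by omega : j ≤ i), min_eq_right (by omega : j ≤ i - 1),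
      min_eq_right (by omega : j - 1 ≤ i), min_eq_right (by omega : j - 1 ≤ i - 1)]
    clear hco hstep hc hEth hBdiag
    grind (splits := 40)

lemma B_iff (B : ℕ → ℕ → ℤ) (h R : ℕ) (hh : 1 ≤ h) (hn : 2 * h < n)
    (hBdiag : ∀ i ∈ Finset.Icc 1 n, ∀ j ∈ Finset.Icc 1 n, i ≠ j →
      B i j = (R : ℤ) * Eth n h (h + 1) i j) (L L' : Flags Φ n)
    (halt : ∀ v : V, Φ v v = 0)
    (hnondeg : ∀ v : V, (∀ w : V, Φ v w = 0) → v = 0)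
    (hc : ∀ j ≤ n, (finrank k (L'.1 j) : ℤ) = ∑ b ∈ Finset.Icc 1 j, coM n B b) :
    (∀ i ∈ Finset.Icc 1 n, ∀ j ∈ Finset.Icc 1 n, D2 (dm L.1 L'.1) i j = B i j) ↔
      Adj h R L L' := by
  set c : ℕ → ℤ := fun j => ∑ b ∈ Finset.Icc 1 j, coM n B b with hcdef
  have hD := D2_B B h R hh hn hBdiag c (fun j => rfl)
  have hc' : ∀ j ≤ n, (finrank k (L'.1 j) : ℤ) = c j := hc
  have c0 : c 0 = 0 := by simp [hcdef]
  constructor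
  · intro hB
    have key := D2_unique n (dm L.1 L'.1) _ (fun j => ?_) (fun i => ?_)
      (fun i hi j hj => (hB i hi j hj).trans (hD i hi j hj).symm)
    · have e0 : ∀ i ≤ n, (finrank k (L.1 i) : ℤ) = c i + ((if i = h then (R : ℤ) else 0) -
          (if i = n - h then (R : ℤ) else 0)) := by
        intro i hi
        rw [← dm_top L L' i, key i hi n le_rfl, min_eq_left hi]
        split_ifs <;> omega
      have e1 : ∀ i ≤ n, (finrank k ↥(L.1 i ⊓ L'.1 i) : ℤ) = c i -
          (if i = n - h then (R : ℤ) else 0) := by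
        intro i hi
        have := key i hi i hi
        unfold dm at this
        rw [this, min_self]
        split_ifs <;> omega
      refine ⟨fun i hi1 hi2 => ?_, ?_, ?_⟩
      · rcases Nat.lt_or_ge n i with hin | hin
        · rw [L.2.2.2.1 i hin.le, L'.2.2.2.1 i hin.le]
        have a1 := e0 i hin
        have a2 := e1 i hin
        have a3 := hc' i hin
        rw [if_neg hi2] at a1 a2
        rw [if_neg hi1] at a1
        have b1 := Submodule.eq_of_le_of_finrank_eq (inf_le_left : L.1 i ⊓ L'.1 i ≤ _) (by omega)
        have b2 := Submodule.eq_of_le_of_finrank_eq (inf_le_right : L.1 i ⊓ L'.1 i ≤ _) (by omega)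
        rw [← b2, b1]
      · have a2 := e1 h (by omega)
        have a3 := hc' h (by omega)
        rw [if_neg (by omega)] at a2
        have b2 := Submodule.eq_of_le_of_finrank_eq (inf_le_right : L.1 h ⊓ L'.1 h ≤ _) (by omega)
        rw [← b2]; exact inf_le_left
      · have a1 := e0 h (by omega)
        have a3 := hc' h (by omega)
        rw [if_neg (by omega : ¬ h = n - h), if_pos rfl] at a1
        omega
    · rw [dm_zl]; simp only [Nat.zero_min, c0]
      rw [if_neg (by omega), if_neg (by omega)]; simp
    · rw [dm_zr]; simp only [Nat.min_zero, c0]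
      rw [if_neg (by omega), if_neg (by omega)]; simp
  · rintro ⟨hadj, hle, hdim⟩
    have hm := L.mono
    have hm' := L'.mono
    have hp : L.1 (n - h) ≤ L'.1 (n - h) := by
      rw [L.2.2.2.2 h (by omega), L'.2.2.2.2 h (by omega)]; exact perp_anti Φ hle
    have key : ∀ i ≤ n, ∀ j ≤ n, dm L.1 L'.1 i j = c (min i j) +
        ((if i = h ∧ h + 1 ≤ j then (R : ℤ) else 0)
        - (if i = n - h ∧ n - h ≤ j then (R : ℤ) else 0)) := by
      intro i hi j hj
      unfold dm
      by_cases a1 : i = h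
      · subst a1
        rw [if_neg (by omega : ¬ (i = n - i ∧ _))]
        by_cases a2 : i + 1 ≤ j
        · rw [if_pos ⟨rfl, a2⟩, min_eq_left (by omega)]
          have : L.1 i ≤ L'.1 j := by
            refine le_trans ?_ (hm' a2)
            by_cases a3 : i + 1 = n - i
            · rw [a3]; exact (hm (by omega)).trans hp
            · rw [hadj (i + 1) (by omega) a3]; exact hm (by omega)
          rw [inf_eq_left.2 this]
          have := hc' i hi
          omega
        · rw [if_neg (by omega), min_eq_right (by omega),
            inf_eq_right.2 ((hm' (by omega : j ≤ i)).trans hle), hc' j hj]; simp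
      · rw [if_neg (by omega)]
        by_cases a2 : i = n - h
        · by_cases a3 : n - h ≤ j
          · rw [if_pos ⟨a2, a3⟩, min_eq_left (by omega), a2, inf_eq_left.2 (hp.trans (hm' a3))]
            have b1 := (perp_finrank Φ halt hnondeg (L.1 h)).1
            have b2 := (perp_finrank Φ halt hnondeg (L'.1 h)).1
            rw [← L.2.2.2.2 h (by omega)] at b1
            rw [← L'.2.2.2.2 h (by omega)] at b2
            have b3 := hc' (n - h) (by omega)
            omega
          · rw [if_neg (by omega), min_eq_right (by omega)]
            have : L'.1 j ≤ L.1 i := by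
              by_cases a4 : j = h
              · rw [a4]; exact hle.trans (hm (by omega))
              · rw [hadj j a4 (by omega)]; exact hm (by omega)
            rw [inf_eq_right.2 this, hc' j hj]; simp
        · rw [if_neg (by omega), ← hadj i a1 a2]
          rcases le_total i j with a3 | a3
          · rw [inf_eq_left.2 (hm' a3), min_eq_left a3, hc' i hi]; simp
          · rw [inf_eq_right.2 (hm' a3), min_eq_right a3, hc' j hj]; simp
    intro i hi j hj
    rw [← hD i hi j hj]
    have hi' := Finset.mem_Icc.1 hi
    have hj' := Finset.mem_Icc.1 hj
    unfold D2
    rw [key i hi'.2 j hj'.2, key (i - 1) (by omega) j hj'.2, key i hi'.2 (j - 1) (by omega),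
      key (i - 1) (by omega) (j - 1) (by omega)]

/-- evaluation of the modification term -/
lemma ite_aux (x : ℤ) (p1 p2 p3 p4 a b : Prop) [Decidable p1] [Decidable p2] [Decidable p3]
    [Decidable p4] [Decidable a] [Decidable b] :
    x * (((if p1 ∧ a then 1 else 0) + (if p2 ∧ b then 1 else 0)) -
      ((if p3 ∧ a then 1 else 0) + (if p4 ∧ b then 1 else 0))) =
    ((if a then (if p1 then x else 0) else 0) + (if b then (if p2 then x else 0) else 0)) -
    ((if a then (if p3 then x else 0) else 0) + (if b then (if p4 then x else 0) else 0)) := by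
  by_cases a <;> by_cases b <;> by_cases p1 <;> by_cases p2 <;> by_cases p3 <;> by_cases p4 <;>
    simp [*] <;> ring

lemma modif_eval (t : ℕ → ℕ) (h : ℕ) (hh : 1 ≤ h) (hn : 2 * h < n) (i j : ℕ)
    (hj : j ∈ Finset.Icc 1 n) :
    ∑ u ∈ Finset.Icc 1 n, (t u : ℤ) * (Eth n h u i j - Eth n (h + 1) u i j) =
      ((if i = h then (t j : ℤ) else 0) + (if i = n + 1 - h then (t (n + 1 - j) : ℤ) else 0))
      - ((if i = h + 1 then (t j : ℤ) else 0) + (if i = n - h then (t (n + 1 - j) : ℤ) else 0)) := by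
  have hj' := Finset.mem_Icc.1 hj
  have e : ∀ u ∈ Finset.Icc 1 n, (t u : ℤ) * (Eth n h u i j - Eth n (h + 1) u i j) =
      ((if u = j then (if i = h then (t u : ℤ) else 0) else 0) +
        (if u = n + 1 - j then (if i = n + 1 - h then (t u : ℤ) else 0) else 0)) -
      ((if u = j then (if i = h + 1 then (t u : ℤ) else 0) else 0) +
        (if u = n + 1 - j then (if i = n - h then (t u : ℤ) else 0) else 0)) := by
    intro u hu
    have hu' := Finset.mem_Icc.1 hu
    unfold Eth
    rw [show n + 1 - (h + 1) = n - h by omega]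
    have e1 : (j = u) = (u = j) := propext eq_comm
    have e2 : (j = n + 1 - u) = (u = n + 1 - j) := by apply propext; omega
    simp only [e1, e2]
    exact ite_aux _ _ _ _ _ _ _
  rw [Finset.sum_congr rfl e, Finset.sum_sub_distrib, Finset.sum_add_distrib,
    Finset.sum_add_distrib, Finset.sum_ite_eq', Finset.sum_ite_eq', Finset.sum_ite_eq',
    Finset.sum_ite_eq', if_pos hj, if_pos hj,
    if_pos (Finset.mem_Icc.2 (by omega) : n + 1 - j ∈ Finset.Icc 1 n),
    if_pos (Finset.mem_Icc.2 (by omega) : n + 1 - j ∈ Finset.Icc 1 n)]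

lemma D2_delta (t : ℕ → ℕ) (h R : ℕ) (hh : 1 ≤ h) (hn : 2 * h < n) (T : ℕ → ℤ)
    (hT : ∀ j ≤ n, T j = ∑ u ∈ Finset.Icc 1 j, (t u : ℤ))
    (i j : ℕ) (hi : i ∈ Finset.Icc 1 n) (hj : j ∈ Finset.Icc 1 n) :
    D2 (fun i j => (if i = h then T j else 0) - (if i = n - h then (R : ℤ) - T (n - j) else 0)) i j
     = ∑ u ∈ Finset.Icc 1 n, (t u : ℤ) * (Eth n h u i j - Eth n (h + 1) u i j) := by
  rw [modif_eval t h hh hn i j hj]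
  have hi' := Finset.mem_Icc.1 hi
  have hj' := Finset.mem_Icc.1 hj
  have hstep : ∀ i, 1 ≤ i → i ≤ n → T i = T (i - 1) + t i := by
    intro i h1 h2
    obtain ⟨j, rfl⟩ : ∃ j, i = j + 1 := ⟨i - 1, by omega⟩
    rw [hT _ h2, hT _ (by omega), Finset.sum_Icc_succ_top (by omega)]; rfl
  have s1 := hstep j hj'.1 hj'.2
  have s2 := hstep (n + 1 - j) (by omega) (by omega)
  rw [show n + 1 - j - 1 = n - j by omega] at s2
  unfold D2
  simp only
  rw [show n - (j - 1) = n + 1 - j by omega]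
  generalize T j = x1 at *
  generalize T (j - 1) = x2 at *
  generalize T (n - j) = x3 at *
  generalize T (n + 1 - j) = x4 at *
  split_ifs <;> omega

end geom

section main

variable {k V : Type*} [Field k] [AddCommGroup V] [Module k V] [FiniteDimensional k V]
variable {Φ : V →ₗ[k] V →ₗ[k] k} {n : ℕ}

/-- the modified matrix -/
def modA (n h : ℕ) (A : ℕ → ℕ → ℤ) (t : ℕ → ℕ) : ℕ → ℕ → ℤ :=
  fun a b => A a b + ∑ u ∈ Finset.Icc 1 n,
                (t u : ℤ) * (Eth n h u a b - Eth n (h + 1) u a b)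

/-- relative position -/
def Pos (A : ℕ → ℕ → ℤ) (L M : Flags Φ n) : Prop :=
  ∀ i ∈ Finset.Icc 1 n, ∀ j ∈ Finset.Icc 1 n, D2 (dm L.1 M.1) i j = A i j

lemma eMat_Pos (A : ℕ → ℕ → ℤ) (L M : Flags Φ n) :
    eMat Φ n A (L, M) = if Pos A L M then 1 else 0 := by
  rw [eMat_eq]; congr

lemma pos_dims {A B : ℕ → ℕ → ℤ} {L M : Flags Φ n} (hp : Pos A L M)
    (hroco : ∀ i ∈ Finset.Icc 1 n, roM n A i = coM n B i) :
    ∀ j ≤ n, (finrank k (L.1 j) : ℤ) = ∑ b ∈ Finset.Icc 1 j, coM n B b := by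
  intro j
  induction j with
  | zero => intro _; rw [L.2.1]; simp
  | succ j ih =>
    intro hj
    have hm : j + 1 ∈ Finset.Icc 1 n := Finset.mem_Icc.2 (by omega)
    rw [Finset.sum_Icc_succ_top (by omega), ← ih (by omega), ← hroco _ hm, ← dm_top L M, ← dm_top L M,
      D2_tele (dm L.1 M.1) (j + 1) (dm_zr L M) n]
    rw [Nat.add_sub_cancel]
    unfold roM
    rw [Finset.sum_congr rfl (fun b hb => hp (j + 1) hm b hb)]

lemma modA_h (A : ℕ → ℕ → ℤ) (t : ℕ → ℕ) (h : ℕ) (hh : 1 ≤ h) (hn : 2 * h < n) (j : ℕ)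
    (hj : j ∈ Finset.Icc 1 n) : modA n h A t h j = A h j + t j := by
  unfold modA
  rw [modif_eval t h hh hn h j hj, if_pos rfl, if_neg (by omega), if_neg (by omega),
    if_neg (by omega)]
  ring

lemma pos_transfer (halt : ∀ v : V, Φ v v = 0)
    (hnondeg : ∀ v : V, (∀ w : V, Φ v w = 0) → v = 0) {h R : ℕ} (hh : 1 ≤ h) (hn : 2 * h < n)
    {L L' : Flags Φ n} (hadj : Adj h R L L') (M : Flags Φ n) (A : ℕ → ℕ → ℤ) (t : ℕ → ℕ)
    (hT : ∀ j ≤ n, dm L.1 M.1 h j - dm L'.1 M.1 h j = ∑ u ∈ Finset.Icc 1 j, (t u : ℤ)) :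
    Pos A L' M ↔ Pos (modA n h A t) L M := by
  set T : ℕ → ℤ := fun j => ∑ u ∈ Finset.Icc 1 j, (t u : ℤ) with hTd
  have key := adj_dm halt hnondeg hn hadj M T (fun j hj => (hT j hj).symm)
  have hD := D2_delta (n := n) t h R hh hn T (fun j _ => rfl)
  have e : ∀ i ∈ Finset.Icc 1 n, ∀ j ∈ Finset.Icc 1 n, D2 (dm L.1 M.1) i j =
      D2 (dm L'.1 M.1) i j + ∑ u ∈ Finset.Icc 1 n,
                (t u : ℤ) * (Eth n h u i j - Eth n (h + 1) u i j) := by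
    intro i hi j hj
    rw [← hD i j hi hj]
    have hi' := Finset.mem_Icc.1 hi
    have hj' := Finset.mem_Icc.1 hj
    unfold D2
    rw [key i hi'.2 j hj'.2, key (i - 1) (by omega) j hj'.2, key i hi'.2 (j - 1) (by omega),
      key (i - 1) (by omega) (j - 1) (by omega)]
    ring
  unfold Pos modA
  constructor
  · intro hp i hi j hj; rw [e i hi j hj, hp i hi j hj]
  · intro hp i hi j hj
    have := hp i hi j hj
    rw [e i hi j hj] at this
    exact add_right_cancel this

/-- existence of `t`. -/
lemma exists_t (halt : ∀ v : V, Φ v v = 0)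
    (hnondeg : ∀ v : V, (∀ w : V, Φ v w = 0) → v = 0) {h R : ℕ} (hh : 1 ≤ h) (hn : 2 * h < n)
    {L L' : Flags Φ n} (hadj : Adj h R L L') (M : Flags Φ n) (A : ℕ → ℕ → ℤ)
    (hp : Pos A L' M) : ∃ t : ℕ → ℕ, (∀ u, t u ≠ 0 → u ∈ Finset.Icc 1 n) ∧
      (∑ u ∈ Finset.Icc 1 n, t u = R) ∧ Pos (modA n h A t) L M := by
  set τ : ℕ → ℤ := fun u => (dm L.1 M.1 h u - dm L'.1 M.1 h u) -
    (dm L.1 M.1 h (u - 1) - dm L'.1 M.1 h (u - 1)) with hτ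
  have hpos : ∀ u, 0 ≤ τ u := by
    intro u
    have h1 := hadj.2.1
    have h2 : M.1 (u - 1) ≤ M.1 u := M.mono (Nat.sub_le _ _)
    have h3 := Submodule.finrank_sup_add_finrank_inf_eq (L'.1 h ⊓ M.1 u) (L.1 h ⊓ M.1 (u - 1))
    rw [inf_inf_inf_comm, inf_eq_left.2 h1, inf_eq_right.2 h2] at h3
    have h4 := Submodule.finrank_mono (sup_le (inf_le_inf_right (M.1 u) h1)
      (inf_le_inf_left (L.1 h) h2))
    simp only [hτ, dm]
    omega
  refine ⟨fun u => if u ∈ Finset.Icc 1 n then (τ u).toNat else 0, ?_, ?_⟩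
  · intro u hu
    by_contra hc
    exact hu (if_neg hc)
  have hsum : ∀ j ≤ n, dm L.1 M.1 h j - dm L'.1 M.1 h j = ∑ u ∈ Finset.Icc 1 j,
      ((if u ∈ Finset.Icc 1 n then (τ u).toNat else 0 : ℕ) : ℤ) := by
    intro j
    induction j with
    | zero => intro _; rw [dm_zr, dm_zr]; simp
    | succ j ih =>
      intro hj
      rw [Finset.sum_Icc_succ_top (by omega), ← ih (by omega),
        if_pos (Finset.mem_Icc.2 (by omega)), Int.toNat_of_nonneg (hpos _)]
      simp only [hτ, Nat.add_sub_cancel]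
      ring
  constructor
  · have := hsum n le_rfl
    rw [dm_top, dm_top, hadj.2.2] at this
    have h5 : ((∑ u ∈ Finset.Icc 1 n, (if u ∈ Finset.Icc 1 n then (τ u).toNat else 0) : ℕ) : ℤ) =
        (R : ℤ) := by
      rw [Nat.cast_sum, ← this, Nat.cast_add]; ring
    exact Int.ofNat_inj.1 h5
  · exact (pos_transfer halt hnondeg hh hn hadj M A _ hsum).1 hp

lemma finsum_card {α : Type*} (P : α → Prop) :
    (∑ᶠ x : α, if P x then (1 : ℚ) else 0) = Nat.card {x // P x} := by
  have h1 := finsum_mem_def {x | P x} (fun _ => (1 : ℚ))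
  have h2 : (∑ᶠ x : α, if P x then (1 : ℚ) else 0) = ∑ᶠ x, Set.indicator {x | P x} (fun _ => (1 : ℚ)) x := by
    apply finsum_congr; intro x; simp [Set.indicator_apply]
  rw [h2, ← h1]
  by_cases hf : ({x | P x} : Set α).Finite
  · rw [finsum_mem_eq_finite_toFinset_sum _ hf]
    have h3 : Nat.card {x // P x} = ({x | P x} : Set α).ncard := rfl
    rw [h3, Set.ncard_eq_toFinset_card _ hf]
    simp
  · have h3 : Nat.card {x // P x} = ({x | P x} : Set α).ncard := rfl
    rw [h3, Set.Infinite.ncard hf, finsum_mem_eq_zero_of_infinite]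
    · simp
    · have h4 : ({x | P x} ∩ Function.support fun _ : α => (1 : ℚ)) = {x | P x} := by
        ext x; simp [Function.mem_support]
      rw [h4]; exact hf

lemma card_flags [Fintype k] (halt : ∀ v : V, Φ v v = 0)
    (hnondeg : ∀ v : V, (∀ w : V, Φ v w = 0) → v = 0) {h R : ℕ} (hh : 1 ≤ h) (hn : 2 * h < n)
    (L M : Flags Φ n) (A : ℕ → ℕ → ℤ) (a t : ℕ → ℕ)
    (ha : ∀ j ∈ Finset.Icc 1 n, A h j = a j)
    (hR : ∑ u ∈ Finset.Icc 1 n, t u = R) (hp : Pos (modA n h A t) L M) :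
    (Nat.card {L' : Flags Φ n // Adj h R L L' ∧ Pos A L' M} : ℚ) =
    (Fintype.card k : ℚ) ^ (∑ j ∈ Finset.Icc 1 n, a j * ∑ u ∈ Finset.Icc 1 (j - 1), t u) *
      ∏ u ∈ Finset.Icc 1 n, qbinom (Fintype.card k : ℚ) ((a u : ℤ) + t u) (t u) := by
  have hhm : h ∈ Finset.Icc 1 n := Finset.mem_Icc.2 (by omega)
  have hUW : L.1 (h - 1) ≤ L.1 h := L.mono (Nat.sub_le _ _)
  have hrow : ∀ j ≤ n, dm L.1 M.1 h j = dm L.1 M.1 (h - 1) j +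
      ∑ b ∈ Finset.Icc 1 j, ((a b : ℤ) + t b) := by
    intro j hj
    rw [D2_tele (dm L.1 M.1) h (dm_zr L M) j]
    congr 1
    refine Finset.sum_congr rfl fun b hb => ?_
    have hb' : b ∈ Finset.Icc 1 n := Finset.mem_Icc.2 (by
      have := Finset.mem_Icc.1 hb; omega)
    rw [hp h hhm b hb', modA_h A t h hh hn b hb', ha b hb']
  set P : ℕ → Submodule k V := fun j => L.1 (h - 1) ⊔ (L.1 h ⊓ M.1 j) with hP
  have P0 : P 0 = L.1 (h - 1) := by simp only [hP, M.2.1]; simp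
  have Pn : P n = L.1 h := by
    simp only [hP, M.2.2.2.1 n le_rfl, inf_top_eq]; exact sup_eq_right.2 hUW
  have hPS : ∀ S : Submodule k V, L.1 (h - 1) ≤ S → S ≤ L.1 h → ∀ j,
      (finrank k ↥(S ⊓ P j) : ℤ) = finrank k (P 0) + finrank k ↥(S ⊓ M.1 j) - dm L.1 M.1 (h - 1) j := by
    intro S h1 h2 j
    have e1 : S ⊓ P j = L.1 (h - 1) ⊔ (S ⊓ M.1 j) := by
      simp only [hP]
      rw [inf_comm S, sup_inf_assoc_of_le _ h1, inf_right_comm, inf_eq_right.2 h2]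
    have e2 := Submodule.finrank_sup_add_finrank_inf_eq (L.1 (h - 1)) (S ⊓ M.1 j)
    rw [← inf_assoc, inf_eq_left.2 h1] at e2
    rw [e1, P0]
    unfold dm
    omega
  have hchain := card_chain P (fun i => sup_le_sup_left (inf_le_inf_left _ (M.mono (by omega))) _)
    a t n (by
      intro j hj
      have e1 := hPS (L.1 h) hUW le_rfl j
      have e2 : L.1 h ⊓ P j = P j := inf_eq_right.2 (sup_le hUW inf_le_left)
      rw [e2] at e1
      have e3 := hrow j hj
      unfold dm at e1 e3
      zify
      rw [e1, e3]; ring)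
  rw [← hchain]
  congr 1
  have hrow' : ∀ L' : Flags Φ n, Adj h R L L' → Pos A L' M → ∀ j ≤ n,
      dm L'.1 M.1 h j = dm L.1 M.1 (h - 1) j + ∑ b ∈ Finset.Icc 1 j, (a b : ℤ) := by
    intro L' hadj hpos j hj
    rw [D2_tele (dm L'.1 M.1) h (dm_zr L' M) j]
    congr 1
    · unfold dm; rw [hadj.1 (h - 1) (by omega) (by omega)]
    refine Finset.sum_congr rfl fun b hb => ?_
    have hb' : b ∈ Finset.Icc 1 n := Finset.mem_Icc.2 (by
      have := Finset.mem_Icc.1 hb; omega)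
    rw [hpos h hhm b hb', ha b hb']
  refine Nat.card_eq_of_bijective (fun L' => ⟨L'.1.1 h, ?_, ?_⟩) ⟨?_, ?_⟩
  · rw [Pn]; exact L'.2.1.2.1
  · intro j hj
    have h1 : L.1 (h - 1) ≤ L'.1.1 h := by
      rw [← L'.2.1.1 (h - 1) (by omega) (by omega)]; exact L'.1.mono (Nat.sub_le _ _)
    have e1 := hPS _ h1 L'.2.1.2.1 j
    have e2 := hrow' L'.1 L'.2.1 L'.2.2 j hj
    unfold dm at e1 e2
    zify
    rw [e1, e2]; ring
  · rintro ⟨L1, a1, b1⟩ ⟨L2, a2, b2⟩ heq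
    apply Subtype.ext
    refine flag_ext (h := h) (by omega) (fun i hi1 hi2 => ?_) (congrArg Subtype.val heq)
    simp only
    rw [a1.1 i hi1 hi2, a2.1 i hi1 hi2]
  · rintro ⟨S, hS1, hS2⟩
    rw [Pn] at hS1
    have hUS : L.1 (h - 1) ≤ S := by
      have := hS2 0 (by omega)
      rw [P0] at this
      have e := Submodule.eq_of_le_of_finrank_eq (inf_le_right : S ⊓ L.1 (h - 1) ≤ _)
        (by simpa using this)
      rw [← e]; exact inf_le_left
    obtain ⟨L', hL1, hL2⟩ := exists_flag halt hnondeg hh hn L S hUS hS1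
    have hT : ∀ j ≤ n, dm L.1 M.1 h j - dm L'.1 M.1 h j = ∑ u ∈ Finset.Icc 1 j, (t u : ℤ) := by
      intro j hj
      have e1 := hPS S hUS hS1 j
      have e2 := hS2 j hj
      have e3 := hrow j hj
      have e4 : dm L'.1 M.1 h j = finrank k ↥(S ⊓ M.1 j) := by unfold dm; rw [hL2]
      zify at e2
      rw [e2] at e1
      rw [e4, e3, Finset.sum_add_distrib]
      linarith
    have hadj : Adj h R L L' := by
      refine ⟨hL1, hL2.le.trans hS1, ?_⟩
      have := hT n le_rfl
      rw [dm_top, dm_top] at this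
      zify
      rw [← hR]; push_cast; linarith
    exact ⟨⟨L', hadj, (pos_transfer halt hnondeg hh hn hadj M A t hT).2 hp⟩, Subtype.ext hL2⟩

end main

end FlagC

open FlagC
/-- multiplication by a divided power of `e_h`, finite type `C`.  -/
theorem statement1 {k V : Type*} [Field k] [Fintype k] [AddCommGroup V] [Module k V]
    [FiniteDimensional k V]
    (hodd : Odd (Fintype.card k))
    (r d : ℕ) (hr : 1 ≤ r) (hd : 1 ≤ d)
    (hdim : Module.finrank k V = 2 * d)
    (Φ : V →ₗ[k] V →ₗ[k] k)
    (halt : ∀ v : V, Φ v v = 0)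
    (hnondeg : ∀ v : V, (∀ w : V, Φ v w = 0) → v = 0)
    (A B : ℕ → ℕ → ℤ)
    (hA : MemXiC (2 * r + 1) d A) (hB : MemXiC (2 * r + 1) d B)
    (hroco : ∀ i ∈ Finset.Icc 1 (2 * r + 1), roM (2 * r + 1) A i = coM (2 * r + 1) B i)
    (h R : ℕ) (hh1 : 1 ≤ h) (hhr : h ≤ r)
    (hBdiag : ∀ i ∈ Finset.Icc 1 (2 * r + 1), ∀ j ∈ Finset.Icc 1 (2 * r + 1), i ≠ j →
      B i j = (R : ℤ) * Eth (2 * r + 1) h (h + 1) i j) :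
    ∀ LL : Flags Φ (2 * r + 1) × Flags Φ (2 * r + 1),
      conv Φ (2 * r + 1) (eMat Φ (2 * r + 1) B) (eMat Φ (2 * r + 1) A) LL =
      ∑ᶠ t : ℕ → ℕ,
        if (∀ u, t u ≠ 0 → u ∈ Finset.Icc 1 (2 * r + 1)) ∧
            (∑ u ∈ Finset.Icc 1 (2 * r + 1), t u = R) ∧
            (h < r → ∀ u ∈ Finset.Icc 1 (2 * r + 1), (t u : ℤ) ≤ A (h + 1) u) ∧
            (h = r → ∀ u ∈ Finset.Icc 1 (2 * r + 1),
              (t u : ℤ) + (t (2 * r + 2 - u) : ℤ) ≤ A (h + 1) u)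
        then
          ((Fintype.card k : ℚ) ^
              (∑ j ∈ Finset.Icc 1 (2 * r + 1), ∑ u ∈ Finset.Icc 1 (2 * r + 1),
                if u < j then A h j * (t u : ℤ) else 0)) *
            (∏ u ∈ Finset.Icc 1 (2 * r + 1),
              qbinom (Fintype.card k : ℚ) (A h u + (t u : ℤ)) (t u)) *
            eMat Φ (2 * r + 1)
              (fun a b => A a b + ∑ u ∈ Finset.Icc 1 (2 * r + 1),
                (t u : ℤ) * (Eth (2 * r + 1) h u a b - Eth (2 * r + 1) (h + 1) u a b)) LL
        else 0 := by
  rintro ⟨L, M⟩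
  have hn : 2 * h < 2 * r + 1 := by omega
  obtain ⟨hA0, -, -⟩ := hA
  have hhm : h ∈ Finset.Icc 1 (2 * r + 1) := Finset.mem_Icc.2 (by omega)
  have hconv : conv Φ (2 * r + 1) (eMat Φ (2 * r + 1) B) (eMat Φ (2 * r + 1) A) (L, M) =
      (Nat.card {L' : Flags Φ (2 * r + 1) // Adj h R L L' ∧ Pos A L' M} : ℚ) := by
    rw [← finsum_card]
    unfold conv
    apply finsum_congr
    intro L'
    simp only
    rw [eMat_Pos, eMat_Pos]
    by_cases hp : Pos A L' M
    · have := B_iff B h R hh1 hn hBdiag L L' halt hnondeg (pos_dims hp hroco)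
      have h2 : Pos B L L' ↔ Adj h R L L' := this
      by_cases h3 : Adj h R L L'
      · rw [if_pos hp, if_pos (h2.2 h3), if_pos ⟨h3, hp⟩, mul_one]
      · rw [if_neg (fun h4 => h3 (h2.1 h4)), if_neg (fun h4 : Adj h R L L' ∧ Pos A L' M => h3 h4.1),
          zero_mul]
    · rw [if_neg hp, if_neg (fun h4 : Adj h R L L' ∧ Pos A L' M => hp h4.2), mul_zero]
  rw [hconv]
  have hmod : ∀ t : ℕ → ℕ, (fun a b => A a b + ∑ u ∈ Finset.Icc 1 (2 * r + 1),
      (t u : ℤ) * (Eth (2 * r + 1) h u a b - Eth (2 * r + 1) (h + 1) u a b)) =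
      modA (2 * r + 1) h A t := fun t => rfl
  simp only [hmod, eMat_Pos]
  by_cases hex : ∃ t : ℕ → ℕ, (∀ u, t u ≠ 0 → u ∈ Finset.Icc 1 (2 * r + 1)) ∧
      (∑ u ∈ Finset.Icc 1 (2 * r + 1), t u = R) ∧ Pos (modA (2 * r + 1) h A t) L M
  · obtain ⟨t, ht1, ht2, ht3⟩ := hex
    rw [finsum_eq_single _ t]
    · have hrow : ∀ u ∈ Finset.Icc 1 (2 * r + 1), 0 ≤ modA (2 * r + 1) h A t (h + 1) u := by
        intro u hu
        rw [← ht3 (h + 1) (Finset.mem_Icc.2 (by omega)) u hu]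
        exact D2_nonneg L M _ _
      rw [if_pos, if_pos ht3, mul_one]
      · rw [card_flags halt hnondeg hh1 hn L M A (fun j => (A h j).toNat) t
          (fun j hj => (Int.toNat_of_nonneg (hA0 h hhm j hj)).symm) ht2 ht3]
        congr 1
        · rw [← zpow_natCast]
          congr 1
          push_cast
          refine Finset.sum_congr rfl fun j hj => ?_
          rw [Int.toNat_of_nonneg (hA0 h hhm j hj), ← Finset.sum_filter, Finset.mul_sum]
          refine Finset.sum_congr ?_ fun _ _ => rfl
          ext u
          have := Finset.mem_Icc.1 hj
          simp only [Finset.mem_filter, Finset.mem_Icc]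
          omega
        · refine Finset.prod_congr rfl fun u hu => ?_
          rw [Int.toNat_of_nonneg (hA0 h hhm u hu)]
      · refine ⟨ht1, ht2, fun hlt u hu => ?_, fun heq u hu => ?_⟩
        · have := hrow u hu
          unfold modA at this
          rw [modif_eval t h hh1 hn (h + 1) u hu, if_neg (by omega), if_neg (by omega),
            if_pos rfl, if_neg (by omega)] at this
          omega
        · have := hrow u hu
          unfold modA at this
          rw [modif_eval t h hh1 hn (h + 1) u hu, if_neg (by omega), if_neg (by omega),
            if_pos rfl, if_pos (by omega)] at this
          rw [show 2 * r + 1 + 1 - u = 2 * r + 2 - u by omega] at this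
          omega
    · intro s hs
      by_cases hc : (∀ u, s u ≠ 0 → u ∈ Finset.Icc 1 (2 * r + 1)) ∧
          ∑ u ∈ Finset.Icc 1 (2 * r + 1), s u = R ∧
          (h < r → ∀ u ∈ Finset.Icc 1 (2 * r + 1), (s u : ℤ) ≤ A (h + 1) u) ∧
          (h = r → ∀ u ∈ Finset.Icc 1 (2 * r + 1),
            (s u : ℤ) + (s (2 * r + 2 - u) : ℤ) ≤ A (h + 1) u)
      · have hne : ¬ Pos (modA (2 * r + 1) h A s) L M := by
          intro hps
          apply hs
          funext u
          by_cases hu : u ∈ Finset.Icc 1 (2 * r + 1)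
          · have e1 := hps h hhm u hu
            have e2 := ht3 h hhm u hu
            rw [modA_h A _ h hh1 hn u hu] at e1 e2
            omega
          · have e1 : s u = 0 := by
              by_contra h0; exact hu (hc.1 u h0)
            have e2 : t u = 0 := by
              by_contra h0; exact hu (ht1 u h0)
            rw [e1, e2]
        rw [if_pos hc, if_neg hne, mul_zero]
      · rw [if_neg hc]
  · have h0 : IsEmpty {L' : Flags Φ (2 * r + 1) // Adj h R L L' ∧ Pos A L' M} :=
      ⟨fun L' => hex (exists_t halt hnondeg hh1 hn L'.2.1 M A L'.2.2)⟩
    rw [Nat.card_of_isEmpty, Nat.cast_zero]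
    symm
    apply finsum_eq_zero_of_forall_eq_zero
    intro t
    split_ifs with hc hps
    · exact absurd ⟨t, hc.1, hc.2.1, hps⟩ hex
    · rw [mul_zero]
    · rfl
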